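/- Let M ≥ 0, N ≥ 1, c ≥ 0 and 0 ≤ I ≤ c be integers. Then in ℤ[q] one has Σ_{i=I}^{c} q^{i(M+N)} · [N+M+c−i−1; M, N−1, c−i] = q^{I(M+N)} · [N+M−1 choose M] · [N+M+c−I choose c−I]. -/

import Mathlib

open scoped BigOperators

noncomputable section

/-- The field ℚ(q). -/
abbrev K : Type := RatFunc ℚ

/-- The variable q. -/
def qq : K := RatFunc.X

/-- The quantum integer [n] = 1 + q + ⋯ + q^{n-1}. -/
def qint (n : ℕ) : K := ∑ i ∈ Finset.range n, qq ^ i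

/-- The quantum factorial [n]! = [1][2]⋯[n]. -/
def qfact (n : ℕ) : K := ∏ i ∈ Finset.range n, qint (i + 1)

/-- The Gaussian binomial coefficient [n choose k] = [n]!/([k]!·[n-k]!),
with the convention that it is 0 when k > n. -/
def qbinom (n k : ℕ) : K :=
  if k ≤ n then qfact n / (qfact k * qfact (n - k)) else 0

/-- The q-multinomial coefficient [k₁+⋯+k_r; k₁,…,k_r] = [k₁+⋯+k_r]!/([k₁]!⋯[k_r]!). -/
def qmultinom (ks : List ℕ) : K := qfact ks.sum / (ks.map qfact).prod

/-!
The multinomial factors as `[M+n+k; M, n, k] = [M+n choose M] · [M+n+k choose k]`, and its first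
factor does not depend on the summation index. What remains is the `q`-analogue of the hockey-stick
identity, obtained by iterating the `q`-Pascal rule.
-/

theorem qint_add (m n : ℕ) : qint (m + n) = qint m + qq ^ m * qint n := by
  simp only [qint, Finset.sum_range_add, Finset.mul_sum, pow_add]

theorem qint_ne_zero {n : ℕ} (hn : n ≠ 0) : qint n ≠ 0 := by
  have qint_eq_algebraMap : qint n =
      algebraMap (Polynomial ℚ) K (∑ i ∈ Finset.range n, Polynomial.X ^ i) := by
    simp only [qint, qq, map_sum, map_pow, RatFunc.algebraMap_X]
  rw [qint_eq_algebraMap]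
  exact RatFunc.algebraMap_ne_zero (Polynomial.monic_geom_sum_X hn).ne_zero

theorem qfact_zero : qfact 0 = 1 :=
  Finset.prod_range_zero _

theorem qfact_succ (n : ℕ) : qfact (n + 1) = qfact n * qint (n + 1) :=
  Finset.prod_range_succ _ _

theorem qfact_ne_zero (n : ℕ) : qfact n ≠ 0 :=
  Finset.prod_ne_zero_iff.mpr fun i _ => qint_ne_zero i.succ_ne_zero

theorem qbinom_eq_div_of_add_eq {d k n : ℕ} (h : d + k = n) :
    qbinom n k = qfact n / (qfact k * qfact d) := by
  subst h
  rw [qbinom, if_pos (Nat.le_add_left k d), Nat.add_sub_cancel]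

theorem qbinom_eq_zero_of_lt {n k : ℕ} (h : n < k) : qbinom n k = 0 :=
  if_neg h.not_ge

theorem qbinom_zero_right (n : ℕ) : qbinom n 0 = 1 := by
  simpa [qfact_zero, qfact_ne_zero] using qbinom_eq_div_of_add_eq n.add_zero

theorem qbinom_self (n : ℕ) : qbinom n n = 1 := by
  simpa [qfact_zero, qfact_ne_zero] using qbinom_eq_div_of_add_eq n.zero_add

theorem qbinom_succ_succ (n k : ℕ) :
    qbinom (n + 1) (k + 1) = qbinom n (k + 1) + qq ^ (n - k) * qbinom n k := by
  rcases lt_trichotomy n k with hlt | rfl | hgt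
  · simp [qbinom_eq_zero_of_lt, hlt, hlt.trans k.lt_succ_self]
  · simp [qbinom_self, qbinom_eq_zero_of_lt]
  · obtain ⟨d, rfl⟩ : ∃ d, n = d + (k + 1) := Nat.exists_eq_add_of_le' hgt
    have exponent_eq : d + (k + 1) - k = d + 1 := by omega
    have qint_split : qint (d + (k + 1) + 1) = qint (d + 1) + qq ^ (d + 1) * qint (k + 1) := by
      rw [← qint_add, Nat.add_right_comm]
    have qint_d_ne := qint_ne_zero d.succ_ne_zero
    have qint_k_ne := qint_ne_zero k.succ_ne_zero
    rw [exponent_eq, qbinom_eq_div_of_add_eq (d := d + 1) (k := k + 1) (by omega),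
      qbinom_eq_div_of_add_eq (d := d) rfl,
      qbinom_eq_div_of_add_eq (d := d + 1) (k := k) (by omega),
      qfact_succ (d + (k + 1)), qint_split, qfact_succ k, qfact_succ d]
    field_simp [qfact_ne_zero]

theorem qmultinom_triple (a b k : ℕ) :
    qmultinom [a, b, k] = qbinom (b + a) a * qbinom (b + a + k) k := by
  have sum_eq : [a, b, k].sum = b + a + k := by
    simp only [List.sum_cons, List.sum_nil]
    omega
  rw [qmultinom, sum_eq, qbinom_eq_div_of_add_eq rfl, qbinom_eq_div_of_add_eq rfl]
  simp only [List.map_cons, List.map_nil, List.prod_cons, List.prod_nil]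
  field_simp [qfact_ne_zero]

theorem sum_range_qq_pow_mul_qbinom (n d : ℕ) :
    ∑ i ∈ Finset.range (d + 1), qq ^ (i * (n + 1)) * qbinom (n + (d - i)) (d - i) =
      qbinom (n + 1 + d) d := by
  induction d with
  | zero => simp [qbinom_zero_right]
  | succ d ih =>
    calc ∑ i ∈ Finset.range (d + 2),
          qq ^ (i * (n + 1)) * qbinom (n + (d + 1 - i)) (d + 1 - i)
        = qq ^ (n + 1) * ∑ i ∈ Finset.range (d + 1),
            qq ^ (i * (n + 1)) * qbinom (n + (d - i)) (d - i) +
          qbinom (n + (d + 1)) (d + 1) := by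
          rw [Finset.sum_range_succ', Finset.mul_sum]
          simp only [Nat.add_sub_add_right, add_one_mul, pow_add, mul_left_comm, mul_assoc,
            zero_mul, pow_zero, one_mul, Nat.sub_zero]
      _ = qbinom (n + 1 + d) (d + 1) + qq ^ (n + 1) * qbinom (n + 1 + d) d := by
          rw [ih, add_comm, Nat.add_right_comm n 1 d, Nat.add_assoc n d 1]
      _ = qbinom (n + 1 + (d + 1)) (d + 1) := by
          rw [← Nat.add_assoc (n + 1) d 1, qbinom_succ_succ, Nat.add_sub_cancel]

theorem sum_Icc_qq_pow_mul_qbinom (n : ℕ) {l c : ℕ} (hlc : l ≤ c) :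
    ∑ i ∈ Finset.Icc l c, qq ^ (i * (n + 1)) * qbinom (n + (c - i)) (c - i) =
      qq ^ (l * (n + 1)) * qbinom (n + 1 + (c - l)) (c - l) := by
  rw [← Finset.Ico_add_one_right_eq_Icc, Finset.sum_Ico_eq_sum_range, Nat.sub_add_comm hlc,
    ← sum_range_qq_pow_mul_qbinom, Finset.mul_sum]
  simp only [add_mul, pow_add, Nat.sub_add_eq, mul_assoc]

theorem stmt_1 (M N c I : ℕ) (hN : 1 ≤ N) (hI : I ≤ c) :
    ∑ i ∈ Finset.Icc I c, qq ^ (i * (M + N)) * qmultinom [M, N - 1, c - i]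
      = qq ^ (I * (M + N)) * qbinom (N + M - 1) M * qbinom (N + M + c - I) (c - I) := by
  obtain ⟨n, rfl⟩ : ∃ n, N = n + 1 := Nat.exists_eq_add_of_le' hN
  have upper_eq : n + 1 + M - 1 = n + M := by omega
  have upper_eq_add : n + 1 + M + c - I = n + M + 1 + (c - I) := by omega
  have exponent_eq : M + (n + 1) = n + M + 1 := by omega
  rw [upper_eq, upper_eq_add, exponent_eq, Nat.add_sub_cancel]
  calc ∑ i ∈ Finset.Icc I c, qq ^ (i * (n + M + 1)) * qmultinom [M, n, c - i]
      = qbinom (n + M) M * ∑ i ∈ Finset.Icc I c,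
          qq ^ (i * (n + M + 1)) * qbinom (n + M + (c - i)) (c - i) := by
        simp only [qmultinom_triple, Finset.mul_sum, mul_left_comm]
    _ = qq ^ (I * (n + M + 1)) * qbinom (n + M) M * qbinom (n + M + 1 + (c - I)) (c - I) := by
        rw [sum_Icc_qq_pow_mul_qbinom _ hI, mul_left_comm, mul_assoc]
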